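/- Let M be a d-dimensional affine continuous VASS all of whose transition matrices are non-negative self-loop matrices, and suppose p(u) →^π p(v) is a run with π = α₁t₁,…,α_ℓ t_ℓ. Let Rep-Half(π) = (α₁/2)t₁, (α₂/4)t₂, …, (α_ℓ/2^ℓ)t_ℓ. Then there is a run p(u) →^{Rep-Half(π)} p(w) for some w with supp(u) ⊆ supp(w), and for every transition t occurring in π and every counter x: (i) if x is additively incremented by t, then w(x) > 0; (ii) if x is additively decremented by t, then supp_t^-(x) ∩ supp(w) ≠ ∅; (iii) if x was pumped by t in the run p(u) →^π p(v), then supp_t^p(x) ∩ supp(w) ≠ ∅. -/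

import Mathlib

/-!
Maintain the invariant `β • u ≤ w` between the configuration `u` of the given run and the
configuration `w` of the halved run. Firing half of the scaled update from `w` is the average of
not updating at all, which retains `w` because a self-loop matrix dominates the identity, and of
firing the whole update, which retains `β` times the next configuration. So every step at most
halves `w` as well as the factor `β`, and no counter that is ever positive in the given run is lost
in the halved one. The three support properties then hold because each of them concerns a counter
that is positive just before or just after a step of the given run.
-/

namespace ACVASS

/-- Vectors of rationals indexed by counters. -/
abbrev Vec (d : ℕ) := Fin d → ℚ

/-- A vector is componentwise non-negative (i.e. lies in ℚ₊^d). -/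
def NonNeg {d : ℕ} (u : Vec d) : Prop := ∀ i, 0 ≤ u i

/-- Square integer matrices of dimension d. -/
abbrev Mat (d : ℕ) := Matrix (Fin d) (Fin d) ℤ

/-- Transitions of a d-dimensional affine continuous VASS. -/
abbrev Trans (Q : Type) (d : ℕ) := Q × Mat d × (Fin d → ℤ) × Q

def Trans.src {Q : Type} {d : ℕ} (t : Trans Q d) : Q := t.1
def Trans.mat {Q : Type} {d : ℕ} (t : Trans Q d) : Mat d := t.2.1
def Trans.upd {Q : Type} {d : ℕ} (t : Trans Q d) : Fin d → ℤ := t.2.2.1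
def Trans.tgt {Q : Type} {d : ℕ} (t : Trans Q d) : Q := t.2.2.2

/-- Cast an integer matrix to a rational matrix. -/
def castMat {d : ℕ} (A : Mat d) : Matrix (Fin d) (Fin d) ℚ := A.map (Int.cast)

/-- Cast an integer vector to a rational vector. -/
def castVec {d : ℕ} (b : Fin d → ℤ) : Vec d := fun i => (b i : ℚ)

/-- A d-dimensional affine continuous VASS: a finite set of transitions. -/
structure ACV (Q : Type) (d : ℕ) where
  T : Finset (Trans Q d)

/-- Configurations: a state together with a vector of counter values. -/
abbrev Conf (Q : Type) (d : ℕ) := Q × Vec d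

/-- A step `p(u) →^{αt} q(v)`: `t` is a transition of `M`, `α ∈ (0,1]`, both
configurations are non-negative and `v = A·u + α·b`. -/
def Step {Q : Type} {d : ℕ} (M : ACV Q d) (C : Conf Q d) (α : ℚ) (t : Trans Q d)
    (C' : Conf Q d) : Prop :=
  t ∈ M.T ∧ 0 < α ∧ α ≤ 1 ∧ C.1 = t.src ∧ C'.1 = t.tgt ∧
    NonNeg C.2 ∧ NonNeg C'.2 ∧
    C'.2 = (castMat t.mat).mulVec C.2 + α • castVec t.upd

/-- Firing sequences. -/
abbrev FSeq (Q : Type) (d : ℕ) := List (ℚ × Trans Q d)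

/-- `Run M C π C'` : `C →^π C'`, i.e. the steps of `π` can be realized in order. -/
inductive Run {Q : Type} {d : ℕ} (M : ACV Q d) : Conf Q d → FSeq Q d → Conf Q d → Prop
  | nil (C : Conf Q d) (h : NonNeg C.2) : Run M C [] C
  | cons {C C' C'' : Conf Q d} {α : ℚ} {t : Trans Q d} {π : FSeq Q d} :
      Step M C α t C' → Run M C' π C'' → Run M C ((α, t) :: π) C''

/-- `C →* C'`. -/
def Reach {Q : Type} {d : ℕ} (M : ACV Q d) (C C' : Conf Q d) : Prop := ∃ π, Run M C π C'

/-- `p(u)` covers `q(v)`: `p(u) →* q(v')` for some `v' ≥ v`. -/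
def Covers {Q : Type} {d : ℕ} (M : ACV Q d) (C C' : Conf Q d) : Prop :=
  ∃ v', C'.2 ≤ v' ∧ Reach M C (C'.1, v')

/-- Support of a vector. -/
def supp {d : ℕ} (u : Vec d) : Set (Fin d) := {i | u i ≠ 0}

/-- `supp_t^-(x) = {y : A(x,y) > 0}`. -/
def suppMinus {Q : Type} {d : ℕ} (t : Trans Q d) (x : Fin d) : Set (Fin d) :=
  {y | 0 < t.mat x y}

/-- `supp_t^+ = {x : b(x) > 0}`. -/
def suppPlus {Q : Type} {d : ℕ} (t : Trans Q d) : Set (Fin d) := {x | 0 < t.upd x}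

/-- `supp_t^p(x)`: counters that can pump `x` via transition `t`. -/
def suppPump {Q : Type} {d : ℕ} (t : Trans Q d) (x : Fin d) : Set (Fin d) :=
  {y | (y ≠ x ∧ 0 < t.mat x y) ∨ (y = x ∧ 1 < t.mat x y)}

/-- The set of transitions occurring in a firing sequence. -/
def seqSupp {Q : Type} {d : ℕ} (π : FSeq Q d) : Set (Trans Q d) := {t | ∃ α, (α, t) ∈ π}

/-- Non-negative matrix. -/
def NonNegMat {d : ℕ} (A : Mat d) : Prop := ∀ i j, 0 ≤ A i j

/-- Non-negative self-loop matrix: non-negative with no zero diagonal entry. -/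
def SelfLoopMat {d : ℕ} (A : Mat d) : Prop := NonNegMat A ∧ ∀ i, A i i ≠ 0

/-- All transition matrices of `M` are non-negative. -/
def NonNegVASS {Q : Type} {d : ℕ} (M : ACV Q d) : Prop := ∀ t ∈ M.T, NonNegMat t.mat

/-- All transition matrices of `M` are non-negative self-loop matrices. -/
def SelfLoopVASS {Q : Type} {d : ℕ} (M : ACV Q d) : Prop := ∀ t ∈ M.T, SelfLoopMat t.mat

/-- `β·π`: scale all fractions of a firing sequence by `β`. -/
def scaleSeq {Q : Type} {d : ℕ} (β : ℚ) (π : FSeq Q d) : FSeq Q d :=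
  π.map (fun p => (β * p.1, p.2))

/-- Counter `x` is pumped by transition `t` in the run obtained by firing `π` from `C`:
some step of the run uses `t` from a source configuration `C₁` with a counter
`y ∈ supp_t^p(x)` of positive value. -/
def PumpedBy {Q : Type} {d : ℕ} (M : ACV Q d) (C : Conf Q d) (π : FSeq Q d)
    (t : Trans Q d) (x : Fin d) : Prop :=
  ∃ (π₁ : FSeq Q d) (α : ℚ) (π₂ : FSeq Q d) (C₁ C₂ : Conf Q d),
    π = π₁ ++ (α, t) :: π₂ ∧ Run M C π₁ C₁ ∧ Step M C₁ α t C₂ ∧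
    ∃ y ∈ suppPump t x, 0 < C₁.2 y

/-- Counter `x` is pumped in the run obtained by firing `π` from `C`. -/
def Pumps {Q : Type} {d : ℕ} (M : ACV Q d) (C : Conf Q d) (π : FSeq Q d) (x : Fin d) : Prop :=
  ∃ t, PumpedBy M C π t x

/-- Edges of the support abstraction `SU_M`. -/
def SuppEdge {Q : Type} {d : ℕ} (M : ACV Q d) (v : Q × Set (Fin d)) (t : Trans Q d)
    (v' : Q × Set (Fin d)) : Prop :=
  t ∈ M.T ∧ v.1 = t.src ∧ v'.1 = t.tgt ∧
    ∀ x : Fin d,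
      (t.upd x < 0 → (suppMinus t x ∩ v.2).Nonempty) ∧
      (0 < t.upd x → x ∈ v'.2) ∧
      (x ∈ v'.2 → 0 < t.upd x ∨ (suppMinus t x ∩ v.2).Nonempty)

/-- Directed-path reachability in the support abstraction `SU_M`. -/
def SuppReach {Q : Type} {d : ℕ} (M : ACV Q d) :
    Q × Set (Fin d) → Q × Set (Fin d) → Prop :=
  Relation.ReflTransGen (fun a b => ∃ t, SuppEdge M a t b)

/-- A step of the continuous VASS `M_X` (only the counters in `X` are tracked). -/
def StepX {Q : Type} {d : ℕ} (M : ACV Q d) (X : Set (Fin d)) (p : Q) (u : Vec d) (α : ℚ)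
    (t : Trans Q d) (q : Q) (v : Vec d) : Prop :=
  t ∈ M.T ∧ 0 < α ∧ α ≤ 1 ∧ p = t.src ∧ q = t.tgt ∧
    (∀ i ∈ X, 0 ≤ u i) ∧ (∀ i ∈ X, 0 ≤ v i) ∧ (∀ i ∈ X, v i = u i + α * castVec t.upd i)

/-- A run of the continuous VASS `M_X`; vectors matter only on the counters of `X`. -/
inductive RunX {Q : Type} {d : ℕ} (M : ACV Q d) (X : Set (Fin d)) :
    Q → Vec d → FSeq Q d → Q → Vec d → Prop
  | nil (p : Q) (u v : Vec d) (h : ∀ i ∈ X, 0 ≤ u i ∧ u i = v i) : RunX M X p u [] p v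
  | cons {p r q : Q} {u w v : Vec d} {α : ℚ} {t : Trans Q d} {π : FSeq Q d} :
      StepX M X p u α t r w → RunX M X r w π q v → RunX M X p u ((α, t) :: π) q v

/-- One edge of the graph `G_M` using only transitions from `S`. -/
def GStep {Q : Type} {d : ℕ} (S : Set (Trans Q d)) (a b : Q) : Prop :=
  ∃ t ∈ S, t.src = a ∧ t.tgt = b

/-- A (possibly empty) path in the graph `G_M` using only transitions from `S`. -/
def GPath {Q : Type} {d : ℕ} (S : Set (Trans Q d)) : Q → Q → Prop :=
  Relation.ReflTransGen (GStep S)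

/-- `Rep-Half(π)`: the i-th fraction of `π` is divided by `2^i`. -/
def repHalf {Q : Type} {d : ℕ} : FSeq Q d → FSeq Q d
  | [] => []
  | (α, t) :: rest => (α / 2, t) :: scaleSeq (1 / 2) (repHalf rest)

/-- Descending partial product `A_{ℓ-1} ⋯ A_j` (0-indexed); for `j = ℓ` this is
the identity matrix. -/
def descProd {d ℓ : ℕ} (A : Fin ℓ → Matrix (Fin d) (Fin d) ℚ) (j : ℕ) :
    Matrix (Fin d) (Fin d) ℚ :=
  (((List.finRange ℓ).drop j).reverse.map A).prod

/-- The permutation matrix `P_σ` with `P_σ(i,j) = 1` iff `σ(i) = j`. -/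
def permMat {n : ℕ} (σ : Equiv.Perm (Fin n)) : Matrix (Fin n) (Fin n) ℤ :=
  Matrix.of fun i j => if σ i = j then 1 else 0

/-- A matrix is a permutation matrix. -/
def IsPermMat {d : ℕ} (A : Mat d) : Prop := ∃ σ : Equiv.Perm (Fin d), A = permMat σ

/-- The n×n block-diagonal matrix with blocks `I_o`, `A`, `I_{n-o-k}`:
`A` occupies rows/columns `o,…,o+k-1` and the rest is identity. -/
def applyBlock {k : ℕ} (A : Matrix (Fin k) (Fin k) ℤ) (o n : ℕ) :
    Matrix (Fin n) (Fin n) ℤ :=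
  Matrix.of fun r c =>
    if h : o ≤ r.val ∧ r.val < o + k ∧ o ≤ c.val ∧ c.val < o + k then
      A ⟨r.val - o, by omega⟩ ⟨c.val - o, by omega⟩
    else if r.val = c.val then 1 else 0

/-- Transitions of a continuous VASS (with identity matrices left implicit). -/
abbrev CTrans (Q : Type) (d : ℕ) := Q × (Fin d → ℤ) × Q

/-- Zero-tests. -/
abbrev ZTest (Q : Type) (d : ℕ) := Q × Fin d × Q

/-- A d-dimensional continuous VASS with zero-tests. -/
structure CVZ (Q : Type) (d : ℕ) where
  T : Finset (CTrans Q d)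
  T0 : Finset (ZTest Q d)

/-- A transition step of a continuous VASS with zero-tests. -/
def CStep {Q : Type} {d : ℕ} (M : CVZ Q d) (C : Conf Q d) (α : ℚ) (t : CTrans Q d)
    (C' : Conf Q d) : Prop :=
  t ∈ M.T ∧ 0 < α ∧ α ≤ 1 ∧ C.1 = t.1 ∧ C'.1 = t.2.2 ∧
    NonNeg C.2 ∧ NonNeg C'.2 ∧ C'.2 = C.2 + α • castVec t.2.1

/-- A zero-test step of a continuous VASS with zero-tests. -/
def ZStep {Q : Type} {d : ℕ} (M : CVZ Q d) (C : Conf Q d) (t : ZTest Q d)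
    (C' : Conf Q d) : Prop :=
  t ∈ M.T0 ∧ C.1 = t.1 ∧ C'.1 = t.2.2 ∧ NonNeg C.2 ∧ C.2 t.2.1 = 0 ∧ C'.2 = C.2

/-- A d-dimensional continuous VASS. -/
structure CV (Q : Type) (d : ℕ) where
  T : Finset (CTrans Q d)

/-- A step of a continuous VASS. -/
def CVStep {Q : Type} {d : ℕ} (M : CV Q d) (C : Conf Q d) (α : ℚ) (t : CTrans Q d)
    (C' : Conf Q d) : Prop :=
  t ∈ M.T ∧ 0 < α ∧ α ≤ 1 ∧ C.1 = t.1 ∧ C'.1 = t.2.2 ∧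
    NonNeg C.2 ∧ NonNeg C'.2 ∧ C'.2 = C.2 + α • castVec t.2.1

/-- Reachability (`→*`) in a continuous VASS. -/
def CVReach {Q : Type} {d : ℕ} (M : CV Q d) : Conf Q d → Conf Q d → Prop :=
  Relation.ReflTransGen (fun C C' => ∃ α t, CVStep M C α t C')


section OrderedMatrix

variable {m n R : Type*} [Fintype n]

theorem mulVec_mono_of_nonneg [Semiring R] [PartialOrder R] [IsOrderedRing R] {A : Matrix m n R}
    (hA : ∀ i j, 0 ≤ A i j) : Monotone A.mulVec := fun _ _ huv i =>
  dotProduct_le_dotProduct_of_nonneg_left huv (hA i)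

variable [DecidableEq n]

theorem le_mulVec_of_one_le [Semiring R] [PartialOrder R] [IsOrderedRing R] {A : Matrix n n R}
    (hA : ∀ i j, (1 : Matrix n n R) i j ≤ A i j) {w : n → R} (hw : 0 ≤ w) : w ≤ A.mulVec w :=
  calc w = (1 : Matrix n n R).mulVec w := (Matrix.one_mulVec w).symm
    _ ≤ A.mulVec w := fun i => dotProduct_le_dotProduct_of_nonneg_right (hA i) hw

theorem convexComb_le_mulVec_add_smul [CommRing R] [PartialOrder R] [IsOrderedRing R]
    {A : Matrix n n R} (hA : ∀ i j, (1 : Matrix n n R) i j ≤ A i j) {v w : n → R} (hw : 0 ≤ w)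
    (hvw : v ≤ w) (c : n → R) {r : R} (hr₀ : 0 ≤ r) (hr₁ : r ≤ 1) :
    (1 - r) • w + r • (A.mulVec v + c) ≤ A.mulVec w + r • c := by
  have : 0 ≤ 1 - r := sub_nonneg.2 hr₁
  have hA₀ : ∀ i j, 0 ≤ A i j := fun i j =>
    le_trans (by rw [Matrix.one_apply]; split_ifs <;> simp) (hA i j)
  calc (1 - r) • w + r • (A.mulVec v + c)
      ≤ (1 - r) • A.mulVec w + r • (A.mulVec w + c) := by
        gcongr
        · exact le_mulVec_of_one_le hA hw
        · exact mulVec_mono_of_nonneg hA₀ hvw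
    _ = A.mulVec w + r • c := by module

end OrderedMatrix

section Support

variable {d : ℕ} {u v : Vec d}

theorem nonNeg_of_smul_le {c : ℚ} (hc : 0 ≤ c) (hu : NonNeg u) (h : c • u ≤ v) : NonNeg v :=
  fun x => (mul_nonneg hc (hu x)).trans (h x)

theorem supp_subset_of_smul_le {c : ℚ} (hc : 0 < c) (hu : NonNeg u) (h : c • u ≤ v) :
    supp u ⊆ supp v := fun x hx =>
  ((mul_pos hc ((hu x).lt_of_ne' hx)).trans_le (h x)).ne'

theorem NonNegMat.castMat_nonneg {A : Mat d} (hA : NonNegMat A) (i j : Fin d) :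
    0 ≤ castMat A i j :=
  Int.cast_nonneg (hA i j)

theorem SelfLoopMat.one_le_castMat {A : Mat d} (hA : SelfLoopMat A) (i j : Fin d) :
    (1 : Matrix (Fin d) (Fin d) ℚ) i j ≤ castMat A i j := by
  rcases eq_or_ne i j with rfl | hij
  · rw [Matrix.one_apply_eq]
    exact Int.cast_one_le_of_pos ((hA.1 i i).lt_of_ne' (hA.2 i))
  · rw [Matrix.one_apply_ne hij]
    exact hA.1.castMat_nonneg i j

theorem NonNegMat.exists_mem_supp_of_mulVec_ne_zero {A : Mat d} (hA : NonNegMat A) {x : Fin d}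
    (h : (castMat A).mulVec u x ≠ 0) : ∃ y, 0 < A x y ∧ y ∈ supp u := by
  obtain ⟨y, -, hy⟩ := Finset.exists_ne_zero_of_sum_ne_zero (s := Finset.univ)
    (f := fun y => castMat A x y * u y) h
  refine ⟨y, (hA x y).lt_of_ne' fun hAy => hy ?_, right_ne_zero_of_mul hy⟩
  simp [castMat, hAy]

end Support

section FiringSequence

variable {Q : Type} {d : ℕ}

theorem scaleSeq_one (π : FSeq Q d) : scaleSeq 1 π = π := by
  simp [scaleSeq]

theorem scaleSeq_scaleSeq (β γ : ℚ) (π : FSeq Q d) :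
    scaleSeq β (scaleSeq γ π) = scaleSeq (β * γ) π := by
  simp [scaleSeq, mul_assoc]

theorem scaleSeq_repHalf_cons (β α : ℚ) (t : Trans Q d) (π : FSeq Q d) :
    scaleSeq β (repHalf ((α, t) :: π)) =
      (β * (α / 2), t) :: scaleSeq (β * (1 / 2)) (repHalf π) := by
  rw [← scaleSeq_scaleSeq]
  rfl

end FiringSequence

section Step

variable {Q : Type} {d : ℕ} {M : ACV Q d} {C C₁ C₂ : Conf Q d} {α : ℚ} {t : Trans Q d}

theorem Step.fraction_pos (h : Step M C α t C₁) : 0 < α :=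
  h.2.1

theorem Step.nonNeg_src (h : Step M C α t C₁) : NonNeg C.2 :=
  h.2.2.2.2.2.1

theorem Step.nonNeg_tgt (h : Step M C α t C₁) : NonNeg C₁.2 :=
  h.2.2.2.2.2.2.1

theorem Step.eq_of_step (h₁ : Step M C α t C₁) (h₂ : Step M C α t C₂) : C₁ = C₂ := by
  obtain ⟨-, -, -, -, hq₁, -, -, hv₁⟩ := h₁
  obtain ⟨-, -, -, -, hq₂, -, -, hv₂⟩ := h₂
  exact Prod.ext (hq₁.trans hq₂.symm) (hv₁.trans hv₂.symm)

theorem Step.apply_eq (h : Step M C α t C₁) (x : Fin d) :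
    C₁.2 x = (castMat t.mat).mulVec C.2 x + α * t.upd x := by
  obtain ⟨-, -, -, -, -, -, -, hv⟩ := h
  exact congrFun hv x

theorem Step.mem_supp_of_upd_pos (hA : NonNegMat t.mat) (h : Step M C α t C₁) {x : Fin d}
    (hx : 0 < t.upd x) : x ∈ supp C₁.2 := by
  have hAC : 0 ≤ (castMat t.mat).mulVec C.2 x :=
    dotProduct_nonneg_of_nonneg (hA.castMat_nonneg x) h.nonNeg_src
  have hαb : 0 < α * t.upd x := mul_pos h.fraction_pos (Int.cast_pos.2 hx)
  exact (h.apply_eq x ▸ add_pos_of_nonneg_of_pos hAC hαb).ne'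

theorem Step.suppMinus_inter_supp_nonempty (hA : NonNegMat t.mat) (h : Step M C α t C₁)
    {x : Fin d} (hx : t.upd x < 0) : (suppMinus t x ∩ supp C.2).Nonempty := by
  have hαb : α * t.upd x < 0 := mul_neg_of_pos_of_neg h.fraction_pos (Int.cast_lt_zero.2 hx)
  have hAC : 0 < (castMat t.mat).mulVec C.2 x := by
    linarith [h.apply_eq x, h.nonNeg_tgt x]
  exact hA.exists_mem_supp_of_mulVec_ne_zero hAC.ne'

theorem Step.exists_step_half (hA : SelfLoopMat t.mat) (h : Step M C α t C₁) {β : ℚ}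
    (hβ₀ : 0 < β) (hβ₁ : β ≤ 1) {w : Vec d} (hw : NonNeg w) (hCw : β • C.2 ≤ w) :
    ∃ w₁, Step M (C.1, w) (β * (α / 2)) t (C₁.1, w₁) ∧
      (1 / 2 : ℚ) • w + (β * (1 / 2)) • C₁.2 ≤ w₁ := by
  obtain ⟨ht, hα₀, hα₁, hsrc, htgt, -, hC₁, hv⟩ := h
  set w₁ := (castMat t.mat).mulVec w + (β * (α / 2)) • castVec t.upd with hw₁
  have hle : (1 / 2 : ℚ) • w + (β * (1 / 2)) • C₁.2 ≤ w₁ :=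
    calc (1 / 2 : ℚ) • w + (β * (1 / 2)) • C₁.2
        = (1 - 1 / 2 : ℚ) • w + (1 / 2 : ℚ) •
            ((castMat t.mat).mulVec (β • C.2) + (β * α) • castVec t.upd) := by
          rw [hv, Matrix.mulVec_smul]; module
      _ ≤ (castMat t.mat).mulVec w + (1 / 2 : ℚ) • (β * α) • castVec t.upd :=
          convexComb_le_mulVec_add_smul hA.one_le_castMat hw hCw _ (by norm_num) (by norm_num)
      _ = w₁ := by rw [hw₁]; module
  have hw₁_nonneg : 0 ≤ w₁ :=
    (add_nonneg (smul_nonneg (by positivity) hw) (smul_nonneg (by positivity) hC₁)).trans hle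
  have hfrac : β * (α / 2) ≤ 1 := mul_le_one₀ hβ₁ (by positivity) (by linarith)
  exact ⟨w₁, ⟨ht, by positivity, hfrac, hsrc, htgt, hw, hw₁_nonneg, rfl⟩, hle⟩

end Step

section Run

variable {Q : Type} {d : ℕ} {M : ACV Q d} {C C₁ C' D : Conf Q d} {α : ℚ} {t : Trans Q d}
  {π : FSeq Q d}

theorem Run.nonNeg_src (h : Run M C π C') : NonNeg C.2 := by
  cases h with
  | nil _ hC => exact hC
  | cons hstep _ => exact hstep.nonNeg_src

theorem Run.nonNeg_tgt (h : Run M C π C') : NonNeg C'.2 := by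
  induction h with
  | nil _ hC => exact hC
  | cons _ _ ih => exact ih

/-- The configuration `D` occurs in the run obtained by firing `π` from `C`, i.e. it is reached by
firing a prefix of `π`. Steps being deterministic, this does not depend on a choice of run. -/
def Visits (M : ACV Q d) (C : Conf Q d) (π : FSeq Q d) (D : Conf Q d) : Prop :=
  ∃ π₁, π₁ <+: π ∧ Run M C π₁ D

theorem Visits.refl (hC : NonNeg C.2) (π : FSeq Q d) : Visits M C π C :=
  ⟨[], List.nil_prefix, .nil C hC⟩

theorem Visits.eq_of_nil (hD : Visits M C [] D) : D = C := by
  obtain ⟨π₁, hπ₁, hrun⟩ := hD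
  obtain rfl := List.prefix_nil.1 hπ₁
  cases hrun
  rfl

theorem Visits.cons (h : Step M C α t C₁) (hD : Visits M C₁ π D) : Visits M C ((α, t) :: π) D := by
  obtain ⟨π₁, hπ₁, hrun⟩ := hD
  exact ⟨(α, t) :: π₁, List.cons_prefix_cons.2 ⟨rfl, hπ₁⟩, .cons h hrun⟩

theorem Visits.eq_or_visits (hD : Visits M C ((α, t) :: π) D) (h : Step M C α t C₁) :
    D = C ∨ Visits M C₁ π D := by
  obtain ⟨π₁, hπ₁, hrun⟩ := hD
  cases hrun with
  | nil => exact .inl rfl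
  | cons hstep hrest =>
    obtain ⟨⟨rfl, rfl⟩, hprefix⟩ := by simpa only [List.cons_prefix_cons, Prod.mk.injEq] using hπ₁
    exact .inr ⟨_, hprefix, hstep.eq_of_step h ▸ hrest⟩

theorem Run.exists_step_of_mem_seqSupp (h : Run M C π C') (ht : t ∈ seqSupp π) :
    ∃ α D D', Step M D α t D' ∧ Visits M C π D ∧ Visits M C π D' := by
  induction h with
  | nil => simp [seqSupp] at ht
  | @cons C C₁ _ α s π hstep hrun ih =>
    obtain ⟨γ, hγ⟩ := ht
    rcases List.mem_cons.1 hγ with heq | hmem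
    · obtain ⟨rfl, rfl⟩ := Prod.mk.inj heq
      exact ⟨_, C, C₁, hstep, .refl hstep.nonNeg_src _,
        .cons hstep (.refl hrun.nonNeg_src _)⟩
    · obtain ⟨δ, D, D', hstep', hD, hD'⟩ := ih ⟨γ, hmem⟩
      exact ⟨δ, D, D', hstep', .cons hstep hD, .cons hstep hD'⟩

theorem PumpedBy.exists_visits {x : Fin d} (h : PumpedBy M C π t x) :
    ∃ D, Visits M C π D ∧ (suppPump t x ∩ supp D.2).Nonempty := by
  obtain ⟨π₁, α, π₂, D, -, rfl, hrun, -, y, hy, hpos⟩ := h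
  exact ⟨D, ⟨π₁, List.prefix_append _ _, hrun⟩, y, hy, hpos.ne'⟩

theorem Run.exists_run_scaleSeq_repHalf (hM : SelfLoopVASS M) (h : Run M C π C') {β : ℚ}
    (hβ₀ : 0 < β) (hβ₁ : β ≤ 1) {w : Vec d} (hCw : β • C.2 ≤ w) :
    ∃ w', Run M (C.1, w) (scaleSeq β (repHalf π)) (C'.1, w') ∧ supp w ⊆ supp w' ∧
      ∀ D, Visits M C π D → supp D.2 ⊆ supp w' := by
  induction h generalizing β w with
  | nil C hC =>
    have hw : NonNeg w := nonNeg_of_smul_le hβ₀.le hC hCw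
    have hsupp : supp C.2 ⊆ supp w := supp_subset_of_smul_le hβ₀ hC hCw
    exact ⟨w, .nil _ hw, subset_rfl, fun D hD => hD.eq_of_nil ▸ hsupp⟩
  | @cons C C₁ _ α t π hstep hrun ih =>
    have hC : NonNeg C.2 := hstep.nonNeg_src
    have hw : NonNeg w := nonNeg_of_smul_le hβ₀.le hC hCw
    have hsupp : supp C.2 ⊆ supp w := supp_subset_of_smul_le hβ₀ hC hCw
    obtain ⟨w₁, hstep₁, hle⟩ := hstep.exists_step_half (hM t hstep.1) hβ₀ hβ₁ hw hCw
    have hww₁ : (1 / 2 : ℚ) • w ≤ w₁ :=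
      (le_add_of_nonneg_right (smul_nonneg (by positivity) hrun.nonNeg_src)).trans hle
    have hC₁w₁ : (β * (1 / 2)) • C₁.2 ≤ w₁ :=
      (le_add_of_nonneg_left (smul_nonneg (by positivity) hw)).trans hle
    have hβ' : 0 < β * (1 / 2) := by positivity
    obtain ⟨w', hrun', hw₁w', hvisits⟩ := ih hβ' (by linarith) hC₁w₁
    have hww' : supp w ⊆ supp w' := (supp_subset_of_smul_le one_half_pos hw hww₁).trans hw₁w'
    refine ⟨w', ?_, hww', fun D hD => ?_⟩
    · rw [scaleSeq_repHalf_cons]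
      exact .cons hstep₁ hrun'
    · rcases hD.eq_or_visits hstep with rfl | hD'
      · exact hsupp.trans hww'
      · exact hvisits D hD'

end Run

theorem repHalf_run_general {Q : Type} {d : ℕ} (M : ACV Q d) (hM : SelfLoopVASS M) (p q : Q)
    (u v : Vec d) (π : FSeq Q d) (hrun : Run M (p, u) π (q, v)) :
    ∃ w : Vec d, Run M (p, u) (repHalf π) (q, w) ∧ supp u ⊆ supp w ∧
      ∀ t ∈ seqSupp π, ∀ x : Fin d,
        (0 < t.upd x → 0 < w x) ∧
        (t.upd x < 0 → (suppMinus t x ∩ supp w).Nonempty) ∧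
        (PumpedBy M (p, u) π t x → (suppPump t x ∩ supp w).Nonempty) := by
  obtain ⟨w, hrun', huw, hvisits⟩ :=
    hrun.exists_run_scaleSeq_repHalf hM one_pos le_rfl (one_smul ℚ u).le
  rw [scaleSeq_one] at hrun'
  refine ⟨w, hrun', huw, fun t ht x => ?_⟩
  obtain ⟨α, D, D', hstep, hD, hD'⟩ := hrun.exists_step_of_mem_seqSupp ht
  have hA : NonNegMat t.mat := (hM t hstep.1).1
  refine ⟨fun hx => ?_, fun hx => ?_, fun hpump => ?_⟩
  · exact (hrun'.nonNeg_tgt x).lt_of_ne' (hvisits D' hD' (hstep.mem_supp_of_upd_pos hA hx))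
  · exact (hstep.suppMinus_inter_supp_nonempty hA hx).mono
      (Set.inter_subset_inter_right _ (hvisits D hD))
  · obtain ⟨E, hE, hne⟩ := hpump.exists_visits
    exact hne.mono (Set.inter_subset_inter_right _ (hvisits E hE))

/-- properties of the `Rep-Half` firing sequence. -/
theorem repHalf_run
    {Q : Type} [Fintype Q] {d : ℕ} (M : ACV Q d) (hM : SelfLoopVASS M)
    (p : Q) (u v : Vec d) (π : FSeq Q d) (hrun : Run M (p, u) π (p, v)) :
    ∃ w : Vec d, Run M (p, u) (repHalf π) (p, w) ∧ supp u ⊆ supp w ∧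
      ∀ t ∈ seqSupp π, ∀ x : Fin d,
        (0 < t.upd x → 0 < w x) ∧
        (t.upd x < 0 → (suppMinus t x ∩ supp w).Nonempty) ∧
        (PumpedBy M (p, u) π t x → (suppPump t x ∩ supp w).Nonempty) :=
  repHalf_run_general M hM p p u v π hrun

end ACVASS
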